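/- Let χ be a Dirichlet character modulo n on O_K and let W : ℝ⁺ → ℝ be a smooth (rapidly decaying) function. Then for any X > 0, ∑_{m ∈ O_K} χ(m) W(N(m)/X) = (X/N(n)) ∑_{k ∈ O_K} g(k, χ) W̃(√(N(k)X/N(n))), where W̃(t) = ∫_{−∞}^{∞} ∫_{−∞}^{∞} W(N(x+yi)) ẽ(−t(x+yi)) dx dy for t ≥ 0. -/

import Mathlib

open Complex Real Filter Topology
open scoped BigOperators Classical

noncomputable section

/-- The norm `N(n)` of a Gaussian integer, as a real number. -/
def Nm (n : GaussianInt) : ℝ := ((Zsqrtd.norm n : ℤ) : ℝ)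

/-- The element `1 + i` of `ℤ[i]`. -/
def ωg : GaussianInt := ⟨1, 1⟩

/-- The element `i` of `ℤ[i]`. -/
def ig : GaussianInt := ⟨0, 1⟩

/-- `n` is primary: `n ≡ 1 mod (1+i)³`. -/
def IsPrimary (n : GaussianInt) : Prop := ωg ^ 3 ∣ (n - 1)

/-- `ẽ(z) = exp(2πi(z/(2i) − z̄/(2i)))`. -/
def eT (z : ℂ) : ℂ :=
  Complex.exp (2 * (Real.pi : ℂ) * Complex.I *
    (z / (2 * Complex.I) - (starRingEnd ℂ) z / (2 * Complex.I)))

/-- `χ a n = (a/n)` is the quadratic residue symbol of `ℤ[i]`: on odd primes `ϖ` it is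
the `±1` (or `0`) value determined by `(a/ϖ) ≡ a^((N(ϖ)-1)/2) mod ϖ`, it is extended
multiplicatively in the denominator over odd elements, and equals `1` on units. -/
structure IsQuadSym (χ : GaussianInt → GaussianInt → ℤ) : Prop where
  val_prime : ∀ ϖ a : GaussianInt, Prime ϖ → ¬ ωg ∣ ϖ → ¬ ϖ ∣ a →
    (χ a ϖ = 1 ∨ χ a ϖ = -1) ∧
      ϖ ∣ (a ^ (((Zsqrtd.norm ϖ).toNat - 1) / 2) - (χ a ϖ : GaussianInt))
  zero_of_dvd : ∀ ϖ a : GaussianInt, Prime ϖ → ϖ ∣ a → χ a ϖ = 0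
  mul_den : ∀ a m n : GaussianInt, ¬ ωg ∣ m → ¬ ωg ∣ n → χ a (m * n) = χ a m * χ a n
  unit_den : ∀ a u : GaussianInt, IsUnit u → χ a u = 1

/-- `L s m = L(s, χ_m)`: the Hecke `L`-function attached to the quadratic symbol `(m/·)`,
given by its Dirichlet series over primary elements (= odd ideals) for `Re s > 1`,
and analytic away from `s = 1`. -/
def IsHeckeL (χ : GaussianInt → GaussianInt → ℤ) (L : ℂ → GaussianInt → ℂ) : Prop :=
  (∀ (m : GaussianInt) (s : ℂ), 1 < s.re →
      L s m = ∑' n : {n : GaussianInt // IsPrimary n}, (χ m n.1 : ℂ) / (Nm n.1 : ℂ) ^ s) ∧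
    ∀ m : GaussianInt, DifferentiableOn ℂ (fun s => L s m) {s : ℂ | s ≠ 1}

/-- The generalized Riemann hypothesis for the family of quadratic Hecke `L`-functions. -/
def GRHfor (L : ℂ → GaussianInt → ℂ) : Prop :=
  ∀ m : GaussianInt, m ≠ 0 → ∀ s : ℂ, 0 < s.re → s.re < 1 → L s m = 0 → s.re = 1 / 2

/-- The absolute norm of an ideal of `ℤ[i]`, as a complex number. -/
def idN (I : Ideal GaussianInt) : ℂ := (Nat.card (GaussianInt ⧸ I) : ℂ)

/-- The Dedekind zeta function of `ℚ(i)`. -/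
def IsDedekindZetaK (Z : ℂ → ℂ) : Prop :=
  (∀ s : ℂ, 1 < s.re → Z s = ∑' I : {I : Ideal GaussianInt // I ≠ ⊥}, idN I.1 ^ (-s)) ∧
    DifferentiableOn ℂ Z {s : ℂ | s ≠ 1}

/-- `ζ_K^{(2)}`: the Euler product of `ζ_K` with the factor at the prime `(1+i)` omitted. -/
def zeta2 (Z : ℂ → ℂ) (s : ℂ) : ℂ := Z s * (1 - (2 : ℂ) ^ (-s))

/-- `P(z) = ∏_ϖ (1 + ((N(ϖ)^{z-1/2} − 1)(N(ϖ) + 1))⁻¹)`, over all primes of `ℤ[i]`. -/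
def Pfun (z : ℂ) : ℂ :=
  ∏' I : {I : Ideal GaussianInt // I ≠ ⊥ ∧ I.IsPrime},
    (1 + 1 / ((idN I.1 ^ (z - 1 / 2) - 1) * (idN I.1 + 1)))

/-- The Euler product over odd primes appearing in the ratios-conjecture main term. -/
def ratioEuler (α β : ℂ) : ℂ :=
  ∏' I : {I : Ideal GaussianInt // I ≠ ⊥ ∧ I.IsPrime ∧ (2 : GaussianInt) ∉ I},
    (1 + (idN I.1 ^ (α - β) - 1) / (idN I.1 ^ (1 + α - β) * (idN I.1 ^ (1 + α + β) - 1)))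

/-- `g r n` is the quadratic Gauss sum `g(r,n) = ∑_{x mod n} (x/n) ẽ(rx/n)`:
for any complete residue system `S` modulo `n` it is given by the indicated finite sum. -/
def IsGaussSum (χ : GaussianInt → GaussianInt → ℤ) (g : GaussianInt → GaussianInt → ℂ) : Prop :=
  ∀ r n : GaussianInt, n ≠ 0 → ∀ S : Finset GaussianInt,
    (∀ z : GaussianInt, ∃! x, x ∈ S ∧ n ∣ (z - x)) →
    g r n = ∑ x ∈ S, (χ x n : ℂ) * eT (GaussianInt.toComplex (r * x) / GaussianInt.toComplex n)

/-- A Dirichlet character modulo `q` on `ℤ[i]` (extended by zero). -/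
def IsDirichletChar (q : GaussianInt) (χ : GaussianInt → ℂ) : Prop :=
  χ 1 = 1 ∧ (∀ a b : GaussianInt, χ (a * b) = χ a * χ b) ∧
    (∀ a b : GaussianInt, q ∣ (a - b) → χ a = χ b) ∧
    (∀ a : GaussianInt, IsCoprime a q → ‖χ a‖ = 1) ∧
    (∀ a : GaussianInt, ¬ IsCoprime a q → χ a = 0)

/-- The Gauss sum `g(r,χ) = ∑_{x mod q} χ(x) ẽ(rx/q)` of a Dirichlet character modulo `q`. -/
def IsGaussSumChar (q : GaussianInt) (χ : GaussianInt → ℂ) (g : GaussianInt → ℂ) : Prop :=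
  ∀ r : GaussianInt, ∀ S : Finset GaussianInt,
    (∀ z : GaussianInt, ∃! x, x ∈ S ∧ q ∣ (z - x)) →
    g r = ∑ x ∈ S, χ x * eT (GaussianInt.toComplex (r * x) / GaussianInt.toComplex q)

/-- A primary `n = a + bi` is of type 1 if `a ≡ 1, b ≡ 0 (mod 4)` (else it is of type 2). -/
def IsTypeOne (n : GaussianInt) : Prop := n.re % 4 = 1 ∧ n.im % 4 = 0

/-- `ψ₁`, the principal character modulo `2` on `ℤ[i]`. -/
def psi1 (m : GaussianInt) : ℂ := if IsCoprime m 2 then 1 else 0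

/-- `ψ₂`, the primitive quadratic character modulo `2` on `ℤ[i]`:
`ψ₂(m) = 1` for `m ≡ 1 (mod 2)`, `ψ₂(m) = −1` for `m ≡ i (mod 2)`, and `0` otherwise. -/
def psi2 (m : GaussianInt) : ℂ :=
  if (2 : GaussianInt) ∣ (m - 1) then 1 else if (2 : GaussianInt) ∣ (m - ig) then -1 else 0

/-- `χ̃_n = ψ_j · (·/n)`, where `j` is the type of the primary element `n`. -/
def tchi (χ : GaussianInt → GaussianInt → ℤ) (n m : GaussianInt) : ℂ :=
  (if IsTypeOne n then psi1 m else psi2 m) * (χ m n : ℂ)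

/-- The transform `W̃(t) = ∫∫ W(N(x+yi)) ẽ(−t(x+yi)) dx dy`. -/
def Wt (W : ℝ → ℝ) (t : ℝ) : ℂ :=
  ∫ x : ℝ, ∫ y : ℝ, ((W (x ^ 2 + y ^ 2) : ℝ) : ℂ) * eT (-(t : ℂ) * ((x : ℂ) + (y : ℂ) * Complex.I))

section PoissonAux

open MeasureTheory
open scoped FourierTransform SchwartzMap

lemma summ_aux : Summable fun b : ℤ => (1:ℝ)/(1+(b:ℝ)^2) := by
  have h := Real.summable_abs_int_rpow (b := 2) one_lt_two
  refine summable_of_isBigO h ?_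
  refine Asymptotics.IsBigO.of_bound 1 ?_
  have : ∀ᶠ b : ℤ in cofinite, b ≠ 0 := by
    rw [Filter.eventually_cofinite]; simp
  filter_upwards [this] with b hb
  have hb' : (0:ℝ) < (b:ℝ)^2 := by positivity
  rw [Real.rpow_neg (abs_nonneg _), Real.norm_of_nonneg (by positivity), Real.norm_of_nonneg (by positivity), one_mul]
  have e : |(b:ℝ)| ^ (2:ℝ) = (b:ℝ)^2 := by
    rw [show (2:ℝ) = ((2:ℕ):ℝ) by norm_num, Real.rpow_natCast, sq_abs]
  rw [e, one_div]
  gcongr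
  simp

lemma poisson1 (f : ℝ → ℂ) (hc : Continuous f) (C : ℝ) (hb : ∀ x, ‖f x‖ ≤ C * (1 / (1 + x^2)))
    (hs : Summable fun n : ℤ => 𝓕 f (n:ℝ)) :
    ∑' n : ℤ, f n = ∑' n : ℤ, 𝓕 f (n:ℝ) := by
  have h := Real.tsum_eq_tsum_fourier_of_rpow_decay_of_summable hc (b := 2) one_lt_two ?_ hs 0
  · simpa using h
  · refine Asymptotics.IsBigO.of_bound C ?_
    have : ∀ᶠ x : ℝ in cocompact ℝ, x ≠ 0 := by
      have := (isCompact_singleton (x := (0:ℝ))).compl_mem_cocompact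
      filter_upwards [this] with x hx using hx
    filter_upwards [this] with x hx
    refine (hb x).trans ?_
    have hC : 0 ≤ C := by
      have := (norm_nonneg _).trans (hb 0)
      simpa using this
    have hx' : (0:ℝ) < x^2 := by positivity
    rw [Real.rpow_neg (abs_nonneg _), Real.norm_of_nonneg (by positivity)]
    norm_cast
    rw [one_div]
    gcongr
    simp

lemma fnorm (f : ℝ → ℂ) (k x : ℝ) : ‖Complex.exp (↑(-2 * π * x * k) * Complex.I) • f x‖ = ‖f x‖ := by
  rw [norm_smul, Complex.norm_exp_ofReal_mul_I, one_mul]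

lemma poisson2 (f : ℝ → ℝ → ℂ) (hc : Continuous (Function.uncurry f)) (C : ℝ)
    (hb : ∀ x y, ‖f x y‖ ≤ C * (1 / (1 + x^2)) * (1 / (1 + y^2)))
    (hs : Summable fun p : ℤ × ℤ => 𝓕 (fun y => 𝓕 (fun x => f x y) (p.1:ℝ)) (p.2:ℝ)) :
    ∑' p : ℤ × ℤ, f p.1 p.2 =
      ∑' p : ℤ × ℤ, 𝓕 (fun y => 𝓕 (fun x => f x y) (p.1:ℝ)) (p.2:ℝ) := by
  have hC : 0 ≤ C := by
    have := (norm_nonneg _).trans (hb 0 0)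
    simpa using this
  have hi : Integrable fun x : ℝ => (1 / (1 + x^2)) := by
    simpa using integrable_inv_one_add_sq
  have hfx : ∀ y, Continuous fun x => f x y := fun y => hc.comp (by fun_prop : Continuous fun x => (x, y))
  have hfy : ∀ x, Continuous fun y => f x y := fun x => hc.comp (by fun_prop : Continuous fun y => (x, y))
  have hintg : ∀ y, Integrable fun x => f x y := by
    intro y
    refine Integrable.mono' ((hi.const_mul C).mul_const (1/(1+y^2))) (hfx y).aestronglyMeasurable ?_
    exact Eventually.of_forall fun x => hb x y
  -- partial transforms
  have hp : ∀ k : ℤ, ∑' b : ℤ, 𝓕 (fun x => f x b) (k:ℝ)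
      = ∑' l : ℤ, 𝓕 (fun y => 𝓕 (fun x => f x y) (k:ℝ)) (l:ℝ) := by
    intro k
    refine poisson1 (fun y => 𝓕 (fun x => f x y) (k:ℝ)) ?_ (∫ x : ℝ, C * (1 / (1 + x^2))) ?_ ?_
    · simp_rw [Real.fourier_real_eq_integral_exp_smul]
      refine continuous_of_dominated (bound := fun x => C * (1 / (1 + x^2))) ?_ ?_ (hi.const_mul C) ?_
      · intro y
        have := hfx y
        exact Continuous.aestronglyMeasurable (by fun_prop)
      · intro y
        refine Eventually.of_forall fun x => ?_
        rw [fnorm (fun x => f x y)]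
        refine (hb x y).trans ?_
        have : 1 / (1 + y^2) ≤ 1 := by
          rw [div_le_one (by positivity)]; nlinarith [sq_nonneg y]
        exact mul_le_of_le_one_right (by positivity) this
      · refine Eventually.of_forall fun x => ?_
        have := hfy x
        fun_prop
    · intro y
      rw [Real.fourier_real_eq_integral_exp_smul, ← integral_mul_const]
      refine norm_integral_le_of_norm_le ((hi.const_mul C).mul_const _) ?_
      refine Eventually.of_forall fun x => ?_
      rw [fnorm (fun x => f x y)]
      exact hb x y
    · exact hs.prod_factor k
  have hbs : ∀ x, Summable fun b : ℤ => C * (1 / (1 + x^2)) * (1 / (1 + (b:ℝ)^2)) :=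
    fun x => summ_aux.mul_left _
  have hsum : Summable fun p : ℤ × ℤ => f p.1 p.2 := by
    refine Summable.of_norm_bounded (g := fun p : ℤ × ℤ => C * ((1 / (1 + (p.1:ℝ)^2)) * (1 / (1 + (p.2:ℝ)^2)))) ?_ ?_
    · exact (summ_aux.mul_of_nonneg summ_aux (fun _ => by positivity) (fun _ => by positivity)).mul_left C
    · intro p
      rw [← mul_assoc]
      exact hb _ _
  have hG : ∀ k : ℤ, 𝓕 (fun x => ∑' b : ℤ, f x b) (k:ℝ) = ∑' b : ℤ, 𝓕 (fun x => f x b) (k:ℝ) := by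
    intro k
    simp_rw [Real.fourier_real_eq_integral_exp_smul]
    refine Eq.trans ?_ (hasSum_integral_of_summable_integral_norm (F := fun (b : ℤ) (x : ℝ) => Complex.exp (↑(-2 * π * x * k) * Complex.I) • f x b) ?_ ?_).tsum_eq.symm
    · congr 1
      ext x
      rw [tsum_const_smul'']
    · intro b
      refine Integrable.mono' (hintg b).norm ?_ ?_
      · have := hfx b
        exact Continuous.aestronglyMeasurable (by fun_prop)
      · exact Eventually.of_forall fun x => (fnorm (fun x => f x b) _ _).le
    · refine Summable.of_nonneg_of_le (fun b => integral_nonneg fun _ => norm_nonneg _) (fun b => ?_) (summ_aux.mul_left (∫ x : ℝ, C * (1 / (1 + x^2))))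
      rw [← integral_mul_const]
      refine integral_mono_of_nonneg (Eventually.of_forall fun _ => norm_nonneg _) ((hi.const_mul C).mul_const _) ?_
      refine Eventually.of_forall fun x => ?_
      show ‖_‖ ≤ _
      rw [fnorm (fun x => f x b)]
      exact hb x b
  rw [hsum.tsum_prod, hs.tsum_prod]
  have h1 := poisson1 (fun x => ∑' b : ℤ, f x b) ?_ (C * ∑' b : ℤ, (1:ℝ)/(1+(b:ℝ)^2)) ?_ ?_
  · rw [h1]
    exact tsum_congr fun k => (hG k).trans (hp k)
  · refine continuous_tsum (u := fun b : ℤ => C * (1 / (1 + (b:ℝ)^2))) (fun b => hfx b) (summ_aux.mul_left _) ?_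
    intro b x
    refine (hb x b).trans ?_
    have : 1 / (1 + x^2) ≤ 1 := by
      rw [div_le_one (by positivity)]; nlinarith [sq_nonneg x]
    gcongr
    exact mul_le_of_le_one_right hC this
  · intro x
    refine (tsum_of_norm_bounded (summ_aux.hasSum.mul_left (C * (1 / (1+x^2)))) (fun b => hb x b)).trans_eq ?_
    ring
  · refine hs.prod.congr fun k => ?_
    exact ((hG k).trans (hp k)).symm

lemma schwartz_bound (f : 𝓢(ℂ, ℂ)) : ∃ C : ℝ, ∀ x y : ℝ,
    ‖f (x + y * Complex.I)‖ ≤ C * (1 / (1 + x^2)) * (1 / (1 + y^2)) := by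
  obtain ⟨C0, _, h0⟩ := f.decay 0 0
  obtain ⟨C4, _, h4⟩ := f.decay 4 0
  refine ⟨2 * (C0 + C4), fun x y => ?_⟩
  have h0 := h0 (x + y * Complex.I)
  have h4 := h4 (x + y * Complex.I)
  simp only [norm_iteratedFDeriv_zero, pow_zero, one_mul] at h0 h4
  set F := ‖f (x + y * Complex.I)‖
  have e : ‖(x + y * Complex.I : ℂ)‖ ^ 2 = x^2+y^2 := by
    rw [Complex.sq_norm, Complex.normSq_add_mul_I]
  have e4 : ‖(x + y * Complex.I : ℂ)‖ ^ 4 = (x^2+y^2)^2 := by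
    rw [← e]; ring
  rw [e4] at h4
  rw [mul_assoc, div_mul_div_comm, mul_div, le_div_iff₀ (by positivity)]
  have hF : 0 ≤ F := norm_nonneg _
  have : (1 + x^2) * (1+y^2) ≤ 2 + 2 * (x^2+y^2)^2 := by
    nlinarith [sq_nonneg (x^2+y^2-1), sq_nonneg x, sq_nonneg y, sq_nonneg (x^2-y^2)]
  calc F * ((1 + x^2) * (1+y^2)) ≤ F * (2 + 2 * (x^2+y^2)^2) := by gcongr
    _ ≤ _ := by nlinarith

lemma schwartz_summable (f : 𝓢(ℂ, ℂ)) : Summable fun p : ℤ × ℤ => f (((p.1:ℝ):ℂ) + ((p.2:ℝ):ℂ) * Complex.I) := by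
  obtain ⟨C, hC⟩ := schwartz_bound f
  refine Summable.of_norm_bounded (g := fun p : ℤ × ℤ => C * ((1 / (1 + (p.1:ℝ)^2)) * (1 / (1 + (p.2:ℝ)^2)))) ?_ ?_
  · exact (summ_aux.mul_of_nonneg summ_aux (fun _ => by positivity) (fun _ => by positivity)).mul_left C
  · intro p
    rw [← mul_assoc]
    exact hC _ _

lemma meq (p : ℝ × ℝ) : Complex.measurableEquivRealProd.symm p = (p.1:ℂ) + (p.2:ℂ) * Complex.I := by
  apply Complex.ext <;> simp [Complex.measurableEquivRealProd]

lemma integral_complex (f : ℂ → ℂ) (hf : Integrable f) : ∫ z, f z = ∫ y : ℝ, ∫ x : ℝ, f (x + y * Complex.I) := by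
  have hm := Complex.volume_preserving_equiv_real_prod.symm
  rw [← hm.integral_comp (MeasurableEquiv.measurableEmbedding _) f, Measure.volume_eq_prod, integral_prod_symm]
  · simp only [meq]
  · exact (hm.integrable_comp_emb (MeasurableEquiv.measurableEmbedding _)).2 hf

lemma integral_complex' (f : ℂ → ℂ) (hf : Integrable f) : ∫ z, f z = ∫ x : ℝ, ∫ y : ℝ, f (x + y * Complex.I) := by
  have hm := Complex.volume_preserving_equiv_real_prod.symm
  rw [← hm.integral_comp (MeasurableEquiv.measurableEmbedding _) f, Measure.volume_eq_prod, integral_prod]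
  · simp only [meq]
  · exact (hm.integrable_comp_emb (MeasurableEquiv.measurableEmbedding _)).2 hf

lemma int_exp (f : 𝓢(ℂ, ℂ)) (w : ℂ) : Integrable fun z : ℂ => Complex.exp (↑(-2 * π * inner ℝ z w) * Complex.I) • f z := by
  refine Integrable.mono' f.integrable.norm ?_ ?_
  · have := f.continuous
    exact Continuous.aestronglyMeasurable (by fun_prop)
  · exact Eventually.of_forall fun x => by rw [norm_smul, Complex.norm_exp_ofReal_mul_I, one_mul]

lemma fourier_iter (f : 𝓢(ℂ, ℂ)) (k l : ℝ) :
    𝓕 (fun y : ℝ => 𝓕 (fun x : ℝ => f (x + y * Complex.I)) k) l = (𝓕 f) (k + l * Complex.I) := by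
  rw [SchwartzMap.fourier_coe, Real.fourier_eq' (f : ℂ → ℂ), integral_complex _ (int_exp f _)]
  simp_rw [Real.fourier_real_eq_integral_exp_smul, ← integral_smul, smul_smul, ← Complex.exp_add]
  congr! 6 with y x
  simp [Complex.inner]
  ring

lemma poissonC (f : 𝓢(ℂ, ℂ)) :
    ∑' p : ℤ × ℤ, f (((p.1:ℝ):ℂ) + ((p.2:ℝ):ℂ) * Complex.I) =
    ∑' p : ℤ × ℤ, (𝓕 f) (((p.1:ℝ):ℂ) + ((p.2:ℝ):ℂ) * Complex.I) := by
  obtain ⟨C, hC⟩ := schwartz_bound f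
  have := poisson2 (fun x y => f (x + y * Complex.I)) ?_ C hC ?_
  · simpa only [fourier_iter] using this
  · have := f.continuous
    simp only [Function.uncurry_def]
    fun_prop
  · simp only [fourier_iter]
    exact schwartz_summable (𝓕 f)

lemma eT_eq (z : ℂ) : eT z = Complex.exp (((2 * π * z.im : ℝ) : ℂ) * Complex.I) := by
  unfold eT
  congr 1
  rw [← sub_div, Complex.sub_conj]
  push_cast
  field_simp

/-- The Schwartz function `z ↦ W(|z|²)`. -/
def Frad (W : 𝓢(ℝ, ℝ)) : 𝓢(ℂ, ℂ) :=
  SchwartzMap.postcompCLM (𝕜 := ℝ) Complex.ofRealCLM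
    (SchwartzMap.compCLM ℝ (g := fun z : ℂ => ‖z‖ ^ 2) (Function.hasTemperateGrowth_norm_sq ℂ)
      ⟨1, 1, fun z => by
        rw [pow_one, one_mul, Real.norm_of_nonneg (by positivity)]
        nlinarith [sq_nonneg (‖z‖ - 1)]⟩ W)

lemma Frad_apply (W : 𝓢(ℝ, ℝ)) (z : ℂ) : Frad W z = ((W (‖z‖ ^ 2) : ℝ) : ℂ) := by
  simp [Frad]

lemma tg_aff (c d : ℂ) : Function.HasTemperateGrowth (fun z : ℂ => c * z + d) := by
  fun_prop

/-- The Schwartz function `z ↦ F(cz+d)`. -/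
def Faff (F : 𝓢(ℂ, ℂ)) (c d : ℂ) (hc : c ≠ 0) : 𝓢(ℂ, ℂ) :=
    SchwartzMap.compCLM ℂ (g := fun z : ℂ => c * z + d) (tg_aff c d)
      ⟨1, (1 + ‖d‖) / ‖c‖, fun z => by
        have h : 0 < ‖c‖ := norm_pos_iff.2 hc
        have h2 : ‖c‖ * ‖z‖ ≤ ‖c * z + d‖ + ‖d‖ := by
          rw [← norm_mul]
          calc ‖c * z‖ = ‖(c * z + d) - d‖ := by ring_nf
            _ ≤ _ := norm_sub_le _ _
        rw [pow_one, div_mul_eq_mul_div, le_div_iff₀ h]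
        nlinarith [norm_nonneg d, norm_nonneg (c * z + d), mul_nonneg (norm_nonneg d) (norm_nonneg (c * z + d))]⟩ F

lemma Faff_apply (F : 𝓢(ℂ, ℂ)) (c d : ℂ) (hc : c ≠ 0) (z : ℂ) : Faff F c d hc z = F (c * z + d) := by
  simp [Faff]

lemma integral_mul_complex (h : ℂ → ℂ) (c : ℂ) (hc : c ≠ 0) :
    ∫ z, h (c * z) = ((‖c‖ ^ 2)⁻¹ : ℝ) • ∫ z, h z := by
  have hn : ‖c‖ ≠ 0 := norm_ne_zero_iff.2 hc
  let u : Circle := ⟨c / ‖c‖, by simp [Submonoid.unitSphere, hn]⟩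
  have h1 : ∀ z : ℂ, c * z = ‖c‖ • (rotation u z) := by
    intro z
    rw [rotation_apply, Complex.real_smul]
    have hn' : (‖c‖ : ℂ) ≠ 0 := by exact_mod_cast hn
    show c * z = ‖c‖ * (c / ‖c‖ * z)
    field_simp
  simp_rw [h1]
  rw [(rotation u).measurePreserving.integral_comp (rotation u).toHomeomorph.measurableEmbedding
    (fun z => h (‖c‖ • z))]
  rw [Measure.integral_comp_smul, Complex.finrank_real_complex, abs_of_nonneg (by positivity)]

lemma integral_aff (h : ℂ → ℂ) (c d : ℂ) (hc : c ≠ 0) :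
    ∫ z, h (c * z + d) = ((‖c‖ ^ 2)⁻¹ : ℝ) • ∫ z, h z := by
  rw [integral_mul_complex (fun z => h (z + d)) c hc, integral_add_right_eq_self]

lemma fourier_Faff (F : 𝓢(ℂ, ℂ)) (c d : ℂ) (hc : c ≠ 0) (w : ℂ) :
    (𝓕 (Faff F c d hc)) w = ((‖c‖ ^ 2)⁻¹ : ℝ) •
      (Complex.exp (((2 * π * inner ℝ d (w / (starRingEnd ℂ) c) : ℝ) : ℂ) * Complex.I) *
      (𝓕 F) (w / (starRingEnd ℂ) c)) := by
  have hc' : (starRingEnd ℂ) c ≠ 0 := by simpa using hc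
  rw [SchwartzMap.fourier_coe, SchwartzMap.fourier_coe, Real.fourier_eq', Real.fourier_eq',
    ← integral_const_mul, ← integral_aff _ c d hc]
  congr 1
  ext z
  rw [Faff_apply, smul_eq_mul, smul_eq_mul, ← mul_assoc, ← Complex.exp_add]
  congr 2
  rw [inner_add_left]
  have : inner ℝ (c * z) (w / (starRingEnd ℂ) c) = inner ℝ z w := by
    rw [Complex.inner, Complex.inner]
    congr 1
    rw [map_mul]
    field_simp
  rw [this]
  push_cast
  ring

lemma fourier_Frad (W : 𝓢(ℝ, ℝ)) (w : ℂ) : (𝓕 (Frad W)) w = Wt (fun t => W t) ‖w‖ := by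
  have h1 : (𝓕 (Frad W)) w = (𝓕 (Frad W)) (‖w‖ * Complex.I) := by
    by_cases hw : w = 0
    · simp [hw]
    have hn : ‖w‖ ≠ 0 := norm_ne_zero_iff.2 hw
    have hn' : (‖w‖ : ℂ) ≠ 0 := by exact_mod_cast hn
    let u : Circle := ⟨w / (‖w‖ * Complex.I), by simp [Submonoid.unitSphere, hn]⟩
    have h := Real.fourier_comp_linearIsometry (rotation u) (Frad W : ℂ → ℂ) (‖w‖ * Complex.I)
    have h2 : (Frad W : ℂ → ℂ) ∘ (rotation u) = Frad W := by
      ext z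
      simp only [Function.comp, Frad_apply, LinearIsometryEquiv.norm_map]
    have h3 : rotation u (‖w‖ * Complex.I) = w := by
      rw [rotation_apply]
      show w / (‖w‖ * Complex.I) * (‖w‖ * Complex.I) = w
      field_simp
    rw [h2, h3] at h
    rw [SchwartzMap.fourier_coe, h]
  rw [h1, SchwartzMap.fourier_coe, Real.fourier_eq' (Frad W : ℂ → ℂ), integral_complex' _ (int_exp _ _)]
  unfold Wt
  congr! 4 with x y
  rw [Frad_apply, smul_eq_mul, mul_comm, eT_eq, Complex.sq_norm, Complex.normSq_add_mul_I]
  congr 4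
  simp [Complex.inner]

/-- The pairs-to-Gaussian-integers equivalence. -/
def eqv : ℤ × ℤ ≃ GaussianInt where
  toFun p := ⟨p.1, p.2⟩
  invFun z := (z.re, z.im)
  left_inv _ := rfl
  right_inv _ := rfl

lemma eqv_c (p : ℤ × ℤ) : GaussianInt.toComplex (eqv p) = ((p.1:ℝ):ℂ) + ((p.2:ℝ):ℂ) * Complex.I := by
  simp [eqv, GaussianInt.toComplex_def']

lemma Nm_eq (n : GaussianInt) : Nm n = ‖GaussianInt.toComplex n‖ ^ 2 := by
  rw [Complex.sq_norm, Nm, GaussianInt.intCast_real_norm]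

lemma schwartz_summable_G (f : 𝓢(ℂ, ℂ)) : Summable fun m : GaussianInt => f (GaussianInt.toComplex m) := by
  rw [← eqv.summable_iff]
  simpa only [Function.comp_def, eqv_c] using schwartz_summable f

lemma poissonG (f : 𝓢(ℂ, ℂ)) :
    ∑' m : GaussianInt, f (GaussianInt.toComplex m) =
    ∑' k : GaussianInt, (𝓕 f) (Complex.I * (starRingEnd ℂ) (GaussianInt.toComplex k)) ∧
    Summable fun k : GaussianInt => (𝓕 f) (Complex.I * (starRingEnd ℂ) (GaussianInt.toComplex k)) := by
  have e : ∀ p : ℤ × ℤ, Complex.I * (starRingEnd ℂ) (GaussianInt.toComplex (((Equiv.prodComm ℤ ℤ).trans eqv) p)) =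
      ((p.1:ℝ):ℂ) + ((p.2:ℝ):ℂ) * Complex.I := by
    intro p
    rw [Equiv.trans_apply, eqv_c]
    apply Complex.ext <;> simp
  constructor
  · rw [← eqv.tsum_eq, ← ((Equiv.prodComm ℤ ℤ).trans eqv).tsum_eq]
    simp only [e, eqv_c]
    exact poissonC f
  · rw [← ((Equiv.prodComm ℤ ℤ).trans eqv).summable_iff]
    simp only [Function.comp_def, e]
    exact schwartz_summable (𝓕 f)

lemma poisson_r (W : 𝓢(ℝ, ℝ)) (n r : GaussianInt) (hn : n ≠ 0) (X : ℝ) (hX : 0 < X) :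
    ∑' m : GaussianInt, ((W (Nm (r + n * m) / X) : ℝ) : ℂ) =
    ∑' k : GaussianInt, ((X / Nm n : ℝ) : ℂ) * (eT (GaussianInt.toComplex (k * r) / GaussianInt.toComplex n) *
      Wt (fun t => W t) (Real.sqrt (Nm k * X / Nm n))) ∧
    Summable fun k : GaussianInt => ((X / Nm n : ℝ) : ℂ) * (eT (GaussianInt.toComplex (k * r) / GaussianInt.toComplex n) *
      Wt (fun t => W t) (Real.sqrt (Nm k * X / Nm n))) := by
  have hs : 0 < √X := Real.sqrt_pos.2 hX
  have hs' : (√X : ℂ) ≠ 0 := by exact_mod_cast hs.ne'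
  have hn' : GaussianInt.toComplex n ≠ 0 := by simpa [GaussianInt.toComplex_eq_zero] using hn
  have hn'' : (starRingEnd ℂ) (GaussianInt.toComplex n) ≠ 0 := by simpa using hn'
  have hc : GaussianInt.toComplex n / √X ≠ 0 := div_ne_zero hn' hs'
  have h := poissonG (Faff (Frad W) (GaussianInt.toComplex n / √X) (GaussianInt.toComplex r / √X) hc)
  have h1 : ∀ m : GaussianInt, Faff (Frad W) (GaussianInt.toComplex n / √X) (GaussianInt.toComplex r / √X) hc (GaussianInt.toComplex m)
      = ((W (Nm (r + n * m) / X) : ℝ) : ℂ) := by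
    intro m
    rw [Faff_apply, Frad_apply, Nm_eq]
    congr 2
    rw [show GaussianInt.toComplex n / √X * GaussianInt.toComplex m + GaussianInt.toComplex r / √X = GaussianInt.toComplex (r + n * m) / √X by
      rw [map_add, map_mul]; ring]
    rw [norm_div, div_pow, Complex.norm_real, Real.norm_of_nonneg hs.le, Real.sq_sqrt hX.le]
  have h2 : ∀ k : GaussianInt, (𝓕 (Faff (Frad W) (GaussianInt.toComplex n / √X) (GaussianInt.toComplex r / √X) hc))
      (Complex.I * (starRingEnd ℂ) (GaussianInt.toComplex k)) =
      ((X / Nm n : ℝ) : ℂ) * (eT (GaussianInt.toComplex (k * r) / GaussianInt.toComplex n) *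
      Wt (fun t => W t) (Real.sqrt (Nm k * X / Nm n))) := by
    intro k
    rw [fourier_Faff, fourier_Frad, Complex.real_smul, eT_eq]
    congr 3
    · rw [Nm_eq, norm_div, div_pow, Complex.norm_real, Real.norm_of_nonneg hs.le, Real.sq_sqrt hX.le, inv_div]
    · congr 3
      rw [real_inner_comm, Complex.inner]
      have : ∀ z : ℂ, z.im = (-Complex.I * z).re := by intro z; simp
      rw [this]
      congr 1
      simp only [map_mul, map_div₀, Complex.conj_conj, Complex.conj_ofReal, Complex.conj_I]
      field_simp
    · rw [Nm_eq, Nm_eq]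
      symm
      rw [Real.sqrt_eq_iff_mul_self_eq (by positivity) (by positivity)]
      simp only [norm_div, norm_mul, Complex.norm_I, RCLike.norm_conj, map_div₀, Complex.conj_ofReal, Complex.norm_real, Real.norm_of_nonneg hs.le]
      have : ‖GaussianInt.toComplex n‖ ≠ 0 := norm_ne_zero_iff.2 hn'
      field_simp
      rw [Real.sq_sqrt hX.le]
  simp only [h1, h2] at h
  exact h

lemma exists_residues (n : GaussianInt) (hn : n ≠ 0) : ∃ S : Finset GaussianInt,
    ∀ z : GaussianInt, ∃! x, x ∈ S ∧ n ∣ (z - x) := by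
  have hfin : ({z : GaussianInt | Zsqrtd.norm z < Zsqrtd.norm n}).Finite := by
    rw [← Set.finite_image_iff (f := eqv.symm) eqv.symm.injective.injOn]
    refine ((Set.finite_Icc (-Zsqrtd.norm n) (Zsqrtd.norm n)).prod (Set.finite_Icc (-Zsqrtd.norm n) (Zsqrtd.norm n))).subset ?_
    rintro _ ⟨z, hz, rfl⟩
    change Zsqrtd.norm z < Zsqrtd.norm n at hz
    rw [Zsqrtd.norm_def z] at hz
    simp only [eqv, Equiv.coe_fn_symm_mk, Set.mem_prod, Set.mem_Icc]
    refine ⟨⟨?_, ?_⟩, ⟨?_, ?_⟩⟩ <;> nlinarith [sq_nonneg z.re, sq_nonneg z.im, sq_nonneg (z.re - 1), sq_nonneg (z.im - 1), sq_nonneg (z.re + 1), sq_nonneg (z.im + 1)]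
  have : Finite (GaussianInt ⧸ Ideal.span {n}) := by
    have := hfin.to_subtype
    refine Finite.of_surjective (fun z : {z : GaussianInt | Zsqrtd.norm z < Zsqrtd.norm n} => Ideal.Quotient.mk (Ideal.span {n}) z.1) ?_
    intro q
    obtain ⟨x, rfl⟩ := Ideal.Quotient.mk_surjective q
    refine ⟨⟨x % n, GaussianInt.norm_mod_lt x hn⟩, ?_⟩
    rw [Ideal.Quotient.eq, Ideal.mem_span_singleton]
    refine ⟨-(x / n), ?_⟩
    have := EuclideanDomain.div_add_mod x n
    linear_combination this
  have := Fintype.ofFinite (GaussianInt ⧸ Ideal.span {n})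
  refine ⟨Finset.univ.image (fun q : GaussianInt ⧸ Ideal.span {n} => Quotient.out q), fun z => ?_⟩
  have ho : ∀ q : GaussianInt ⧸ Ideal.span {n}, Ideal.Quotient.mk (Ideal.span {n}) (Quotient.out q) = q := fun q => Quotient.out_eq q
  refine ⟨Quotient.out (Ideal.Quotient.mk (Ideal.span {n}) z), ⟨by simp, ?_⟩, ?_⟩
  · rw [← Ideal.mem_span_singleton, ← Ideal.Quotient.eq, ho]
  · rintro y ⟨hy, hd⟩
    rw [← Ideal.mem_span_singleton, ← Ideal.Quotient.eq] at hd
    simp only [Finset.mem_image, Finset.mem_univ, true_and] at hy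
    obtain ⟨q, rfl⟩ := hy
    rw [ho] at hd
    rw [hd]

lemma regroup (n : GaussianInt) (hn : n ≠ 0) (S : Finset GaussianInt)
    (hS : ∀ z : GaussianInt, ∃! x, x ∈ S ∧ n ∣ (z - x)) (h : GaussianInt → ℂ) (hh : Summable h) :
    ∑' m, h m = ∑ r ∈ S, ∑' k, h (r + n * k) := by
  have hb : Function.Bijective (fun p : S × GaussianInt => p.1.1 + n * p.2) := by
    constructor
    · rintro ⟨⟨a, ha⟩, k⟩ ⟨⟨b, hb⟩, l⟩ hab
      simp only at hab
      obtain rfl : a = b := (hS (a + n * k)).unique ⟨ha, k, by ring⟩ ⟨hb, l, by rw [hab]; ring⟩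
      have : k = l := mul_left_cancel₀ hn (add_left_cancel hab)
      rw [this]
    · intro z
      obtain ⟨x, ⟨hx, k, hk⟩, -⟩ := hS z
      exact ⟨(⟨x, hx⟩, k), by show x + n * k = z; rw [← hk]; ring⟩
  have hs := (Equiv.ofBijective _ hb).summable_iff.2 hh
  rw [← (Equiv.ofBijective _ hb).tsum_eq]
  refine (Summable.tsum_prod hs).trans ?_
  rw [tsum_fintype]
  exact Finset.sum_coe_sort S (fun r => ∑' k, h (r + n * k))

end PoissonAux

/-- the Poisson summation formula for smoothed character sums over `ℤ[i]`
(Lemma 2.2 of the paper). -/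
theorem poisson_summation_GaussianInt
    (n : GaussianInt) (hn : n ≠ 0) (χ : GaussianInt → ℂ) (hχ : IsDirichletChar n χ)
    (g : GaussianInt → ℂ) (hg : IsGaussSumChar n χ g)
    (W : SchwartzMap ℝ ℝ) (X : ℝ) (hX : 0 < X) :
    ∑' m : GaussianInt, χ m * ((W (Nm m / X) : ℝ) : ℂ) =
      ((X / Nm n : ℝ) : ℂ) *
        ∑' k : GaussianInt, g k * Wt (fun t => W t) (Real.sqrt (Nm k * X / Nm n)) := by
  obtain ⟨S, hS⟩ := exists_residues n hn
  obtain ⟨-, -, hper, hu, hz⟩ := hχ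
  have hle : ∀ m, ‖χ m‖ ≤ 1 := by
    intro m
    by_cases hm : IsCoprime m n
    · exact (hu m hm).le
    · rw [hz m hm]; simp
  have hsum : Summable fun m : GaussianInt => χ m * ((W (Nm m / X) : ℝ) : ℂ) := by
    have hs' : ((√X)⁻¹ : ℂ) ≠ 0 := inv_ne_zero (by exact_mod_cast (Real.sqrt_pos.2 hX).ne')
    refine Summable.of_norm_bounded (schwartz_summable_G (Faff (Frad W) (√X)⁻¹ 0 hs')).norm fun m => ?_
    rw [Faff_apply, Frad_apply, norm_mul, add_zero, norm_mul, mul_pow, norm_inv, Complex.norm_real (√X),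
      Real.norm_of_nonneg (Real.sqrt_nonneg _), inv_pow, Real.sq_sqrt hX.le, ← Nm_eq, inv_mul_eq_div]
    exact mul_le_of_le_one_left (norm_nonneg _) (hle m)
  rw [regroup n hn S hS _ hsum, ← tsum_mul_left]
  have h1 : ∀ k : GaussianInt, ((X / Nm n : ℝ) : ℂ) * (g k * Wt (fun t => W t) (Real.sqrt (Nm k * X / Nm n))) =
      ∑ r ∈ S, χ r * (((X / Nm n : ℝ) : ℂ) * (eT (GaussianInt.toComplex (k * r) / GaussianInt.toComplex n) *
        Wt (fun t => W t) (Real.sqrt (Nm k * X / Nm n)))) := by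
    intro k
    rw [hg k S hS, Finset.sum_mul, Finset.mul_sum]
    refine Finset.sum_congr rfl fun r _ => ?_
    ring
  simp_rw [h1]
  rw [Summable.tsum_finsetSum fun r _ => (poisson_r W n r hn X hX).2.mul_left (χ r)]
  refine Finset.sum_congr rfl fun r _ => ?_
  rw [tsum_mul_left, ← (poisson_r W n r hn X hX).1, ← tsum_mul_left]
  refine tsum_congr fun k => ?_
  rw [hper (r + n * k) r ⟨k, by ring⟩]
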